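/- Let B_p(x,y) = ∫_{ℝ^d} e^{i⟨x−y,ξ⟩} b_p(ξ) dξ be the B-spline kernel on ℝ^d of even order p, where b_p(ξ) = (2π)^{−d} ∏_{j=1}^d (sin(ξ_j/2)/(ξ_j/2))^p, and let A_τ(x,y) = ∑_{j=1}^d exp(−|x_j−y_j|²/τ) be the ANOVA kernel with parameter τ > 0. Then: (a) for even integers p < q, B_p − B_q is a positive semidefinite kernel on ℝ^d, 1 is the least constant λ ≥ 0 for which λB_p − B_q is a positive semidefinite kernel, and there is no λ ≥ 0 for which λB_q − B_p is a positive semidefinite kernel; (b) for 0 < τ₁ < τ₂, √(τ₂/τ₁) A_{τ₁} − A_{τ₂} is a positive semidefinite kernel on ℝ^d, √(τ₂/τ₁) is the least constant λ ≥ 0 for which λA_{τ₁} − A_{τ₂} is a positive semidefinite kernel, and there is no λ ≥ 0 for which λA_{τ₂} − A_{τ₁} is a positive semidefinite kernel. -/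

import Mathlib

open MeasureTheory
open scoped ComplexOrder

/-- A function `K : X × X → ℂ` is a positive semidefinite kernel if every finite
quadratic form `∑ j, ∑ k, c j * conj (c k) * K (x j) (x k)` is a nonnegative real number. -/
def IsPSDKernel {X : Type*} (K : X → X → ℂ) : Prop :=
  ∀ (n : ℕ) (x : Fin n → X) (c : Fin n → ℂ),
    0 ≤ ∑ j, ∑ k, c j * (starRingEnd ℂ) (c k) * K (x j) (x k)

/-- The Fourier density `b_p(ξ) = (2π)^{−d} ∏_j (sin(ξ_j/2)/(ξ_j/2))^p` of the
B-spline kernel of order `p`. -/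
noncomputable def bsplineDensity (d p : ℕ) (ξ : EuclideanSpace ℝ (Fin d)) : ℝ :=
  (2 * Real.pi) ^ (-(d : ℤ)) *
    ∏ j, (if ξ j = 0 then 1 else Real.sin (ξ j / 2) / (ξ j / 2)) ^ p

/-- The B-spline kernel `B_p(x,y) = ∫_{ℝ^d} e^{i⟨x−y,ξ⟩} b_p(ξ) dξ` on `ℝ^d`. -/
noncomputable def bsplineK (d p : ℕ) (x y : EuclideanSpace ℝ (Fin d)) : ℂ :=
  ∫ ξ, Complex.exp (Complex.I * ((inner ℝ (x - y) ξ : ℝ) : ℂ)) * (bsplineDensity d p ξ : ℂ)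

/-- The ANOVA kernel `A_τ(x,y) = ∑_{j=1}^d exp(−|x_j−y_j|²/τ)` on `ℝ^d`. -/
noncomputable def anovaK (d : ℕ) (τ : ℝ) (x y : EuclideanSpace ℝ (Fin d)) : ℂ :=
  ((∑ j, Real.exp (-|x j - y j| ^ 2 / τ) : ℝ) : ℂ)

section Helpers

open Filter Topology

/-- Inverse Fourier transform of a real density. -/
noncomputable def charK {E : Type*} [NormedAddCommGroup E] [InnerProductSpace ℝ E]
    [MeasurableSpace E] [BorelSpace E] [FiniteDimensional ℝ E] (f : E → ℝ) (u : E) : ℂ :=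
  ∫ ξ, Complex.exp (Complex.I * ((inner ℝ u ξ : ℝ) : ℂ)) * (f ξ : ℂ)

/-- Trigonometric polynomials. -/
def IsTrig {E : Type*} [NormedAddCommGroup E] [InnerProductSpace ℝ E] (P : E → ℂ) : Prop :=
  ∃ (ι : Type) (_ : Fintype ι) (x : ι → E) (c : ι → ℂ),
    ∀ ξ, P ξ = ∑ j, c j * Complex.exp (Complex.I * ((inner ℝ (x j) ξ : ℝ) : ℂ))

variable {E : Type*} [NormedAddCommGroup E] [InnerProductSpace ℝ E]

lemma IsTrig.mul {P Q : E → ℂ} (hP : IsTrig P) (hQ : IsTrig Q) :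
    IsTrig (fun ξ => P ξ * Q ξ) := by
  obtain ⟨ι, _, x, c, h⟩ := hP
  obtain ⟨κ, _, y, e, h'⟩ := hQ
  refine ⟨ι × κ, inferInstance, fun a => x a.1 + y a.2, fun a => c a.1 * e a.2, fun ξ => ?_⟩
  simp only [h, h']
  rw [Finset.sum_mul_sum, ← Finset.sum_product']
  refine Finset.sum_congr rfl fun a _ => ?_
  rw [inner_add_left]
  push_cast
  rw [mul_add, Complex.exp_add]
  ring

lemma isTrig_one : IsTrig (fun _ : E => (1 : ℂ)) :=
  ⟨Unit, inferInstance, fun _ => 0, fun _ => 1, fun ξ => by simp⟩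

lemma IsTrig.pow {P : E → ℂ} (hP : IsTrig P) (n : ℕ) : IsTrig (fun ξ => P ξ ^ n) := by
  induction n with
  | zero => simpa using isTrig_one
  | succ n ih => simpa only [pow_succ] using ih.mul hP

lemma isTrig_prod {κ : Type*} (s : Finset κ) (P : κ → E → ℂ) (hP : ∀ i, IsTrig (P i)) :
    IsTrig (fun ξ => ∏ i ∈ s, P i ξ) := by
  classical
  induction s using Finset.induction_on with
  | empty => simpa using isTrig_one
  | insert a s ha ih =>
    simp only [Finset.prod_insert ha]
    exact (hP a).mul ih

lemma isTrig_cos (v : E) (b : ℝ) :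
    IsTrig (fun ξ : E => ((Real.cos (inner ℝ v ξ + b) : ℝ) : ℂ)) := by
  refine ⟨Bool, inferInstance, fun t => if t then v else -v,
    fun t => if t then Complex.exp (Complex.I * b) / 2 else Complex.exp (-(Complex.I * b)) / 2,
    fun ξ => ?_⟩
  simp only [Fintype.sum_bool, if_true, Bool.false_eq_true, if_false, inner_neg_left]
  push_cast
  rw [Complex.cos, div_mul_eq_mul_div, div_mul_eq_mul_div, ← Complex.exp_add, ← Complex.exp_add,
    add_div]
  congr 3 <;> ring

lemma tendsto_cos_pow (t : ℝ) :
    Tendsto (fun n : ℕ => (Real.cos (t / √n) ^ 2) ^ n) atTop (𝓝 (Real.exp (-t ^ 2))) := by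
  have h : Tendsto (fun n : ℕ => (n : ℝ) * (-Real.sin (t / √n) ^ 2)) atTop (𝓝 (-t ^ 2)) := by
    have h1 : Tendsto (fun n : ℕ => t / √(n : ℝ)) atTop (𝓝 0) :=
      Tendsto.div_atTop tendsto_const_nhds
        (Real.tendsto_sqrt_atTop.comp tendsto_natCast_atTop_atTop)
    have h2 : Tendsto (fun n : ℕ => -(t ^ 2 * Real.sinc (t / √(n : ℝ)) ^ 2)) atTop
        (𝓝 (-(t ^ 2 * Real.sinc 0 ^ 2))) :=
      ((((Real.continuous_sinc.tendsto 0).comp h1).pow 2).const_mul _).neg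
    simp only [Real.sinc_zero, one_pow, mul_one] at h2
    refine h2.congr' ?_
    filter_upwards [eventually_gt_atTop 0] with n hn
    have hn' : (0 : ℝ) < n := by exact_mod_cast hn
    by_cases ht : t = 0
    · simp [ht]
    · have hs : √(n : ℝ) ≠ 0 := (Real.sqrt_pos.2 hn').ne'
      rw [Real.sinc_of_ne_zero (div_ne_zero ht hs)]
      field_simp
      rw [Real.sq_sqrt hn'.le, mul_comm]
  refine (Real.tendsto_one_add_pow_exp_of_tendsto h).congr fun n => ?_
  rw [Real.cos_sq' (t / √n)]
  ring

variable [MeasurableSpace E] [BorelSpace E] [FiniteDimensional ℝ E]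

lemma integrable_char {f : E → ℝ} (hf : Integrable f) (u : E) :
    Integrable (fun ξ => Complex.exp (Complex.I * ((inner ℝ u ξ : ℝ) : ℂ)) * (f ξ : ℂ)) := by
  refine hf.ofReal.bdd_mul (c := 1) ?_ ?_
  · exact Continuous.aestronglyMeasurable (by fun_prop)
  · refine Eventually.of_forall fun ξ => ?_
    rw [mul_comm, Complex.norm_exp_ofReal_mul_I]

lemma quad_eq {ι : Type*} [Fintype ι] {f : E → ℝ} (hf : Integrable f) (x : ι → E) (c : ι → ℂ) :
    ∑ j, ∑ k, c j * (starRingEnd ℂ) (c k) * charK f (x j - x k) =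
      ((∫ ξ, Complex.normSq (∑ j, c j * Complex.exp (Complex.I * ((inner ℝ (x j) ξ : ℝ) : ℂ)))
        * f ξ : ℝ) : ℂ) := by
  rw [← integral_complex_ofReal]
  simp only [charK, ← integral_const_mul]
  have hI : ∀ j k, Integrable (fun ξ => c j * (starRingEnd ℂ) (c k) *
      (Complex.exp (Complex.I * ((inner ℝ (x j - x k) ξ : ℝ) : ℂ)) * (f ξ : ℂ))) :=
    fun j k => (integrable_char hf _).const_mul _
  rw [Finset.sum_congr rfl fun j _ => (integral_finsetSum _ fun k _ => hI j k).symm]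
  rw [← integral_finsetSum _ fun j _ => integrable_finsetSum _ fun k _ => hI j k]
  refine integral_congr_ae (Eventually.of_forall fun ξ => ?_)
  beta_reduce
  push_cast
  rw [Complex.normSq_eq_conj_mul_self, mul_comm (starRingEnd ℂ _), map_sum, Finset.sum_mul_sum,
    Finset.sum_mul]
  refine Finset.sum_congr rfl fun j _ => ?_
  rw [Finset.sum_mul]
  refine Finset.sum_congr rfl fun k _ => ?_
  rw [map_mul, ← Complex.exp_conj, map_mul, Complex.conj_I, Complex.conj_ofReal, inner_sub_left]
  push_cast
  rw [mul_sub, sub_eq_add_neg, Complex.exp_add, neg_mul]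
  ring

lemma psd_of_nonneg {f : E → ℝ} (hf : Integrable f) (h0 : ∀ ξ, 0 ≤ f ξ) :
    IsPSDKernel (fun x y : E => charK f (x - y)) := by
  intro n x c
  rw [quad_eq hf]
  exact_mod_cast integral_nonneg fun ξ => mul_nonneg (Complex.normSq_nonneg _) (h0 ξ)

lemma psd_fintype {X : Type*} {K : X → X → ℂ} (hK : IsPSDKernel K) {ι : Type*} [Fintype ι]
    (x : ι → X) (c : ι → ℂ) :
    0 ≤ ∑ j, ∑ k, c j * (starRingEnd ℂ) (c k) * K (x j) (x k) := by
  have e := (Fintype.equivFin ι).symm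
  have := hK _ (x ∘ e) (c ∘ e)
  rw [← e.sum_comp]
  simpa only [← e.sum_comp (fun k => c _ * (starRingEnd ℂ) (c k) * K (x _) (x k)),
    Function.comp] using this

lemma trig_nonneg {K : E → E → ℂ} (hK : IsPSDKernel K) {C : ℝ} {f : E → ℝ} (hf : Integrable f)
    (hKf : ∀ x y, K x y = C + charK f (x - y)) {P : E → ℂ} (hP : IsTrig P) :
    0 ≤ C * Complex.normSq (P 0) + ∫ ξ, Complex.normSq (P ξ) * f ξ := by
  obtain ⟨ι, _, x, c, h⟩ := hP
  have h1 := psd_fintype hK x c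
  simp only [hKf, mul_add, Finset.sum_add_distrib] at h1
  rw [quad_eq hf] at h1
  have h2 : ∑ j, ∑ k, c j * (starRingEnd ℂ) (c k) * (C : ℂ) =
      ((C * Complex.normSq (P 0) : ℝ) : ℂ) := by
    simp only [h, inner_zero_right, Complex.ofReal_zero, mul_zero, Complex.exp_zero, mul_one]
    push_cast
    rw [Complex.normSq_eq_conj_mul_self, mul_comm (starRingEnd ℂ _), map_sum, Finset.sum_mul_sum,
      Finset.mul_sum]
    refine Finset.sum_congr rfl fun j _ => ?_
    rw [Finset.mul_sum]
    exact Finset.sum_congr rfl fun k _ => by ring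
  rw [h2] at h1
  simp only [h] at h1 ⊢
  exact_mod_cast h1

lemma gauss_nonneg {K : E → E → ℂ} (hK : IsPSDKernel K) {C : ℝ} {f : E → ℝ} (hf : Integrable f)
    (hKf : ∀ x y, K x y = C + charK f (x - y)) (a : ℝ) (v : E) :
    0 ≤ C * Real.exp (-a ^ 2 * ‖v‖ ^ 2) + ∫ ξ, Real.exp (-a ^ 2 * ‖v - ξ‖ ^ 2) * f ξ := by
  let e := stdOrthonormalBasis ℝ E
  let P : ℕ → E → ℂ := fun n ξ =>
    (∏ i, ((Real.cos (inner ℝ ((a / √n) • e i) ξ + (-(a / √n * inner ℝ (e i) v))) : ℝ) : ℂ)) ^ n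
  have hP : ∀ n, IsTrig (P n) := fun n =>
    (isTrig_prod _ _ fun i => isTrig_cos _ _).pow n
  have hsq : ∀ n ξ, Complex.normSq (P n ξ) =
      ∏ i, (Real.cos ((a * inner ℝ (e i) (ξ - v)) / √n) ^ 2) ^ n := by
    intro n ξ
    simp only [P]
    rw [← Complex.ofReal_prod, ← Complex.ofReal_pow, Complex.normSq_ofReal, ← mul_pow,
      ← Finset.prod_mul_distrib, ← Finset.prod_pow]
    refine Finset.prod_congr rfl fun i _ => ?_
    rw [← sq, inner_smul_left, inner_sub_right]
    congr 3
    simp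
    ring
  have hlim : ∀ ξ, Tendsto (fun n => Complex.normSq (P n ξ)) atTop
      (𝓝 (Real.exp (-a ^ 2 * ‖v - ξ‖ ^ 2))) := by
    intro ξ
    have h1 : Real.exp (-a ^ 2 * ‖v - ξ‖ ^ 2) =
        ∏ i, Real.exp (-(a * inner ℝ (e i) (ξ - v)) ^ 2) := by
      rw [← Real.exp_sum, norm_sub_rev, ← e.sum_sq_norm_inner_right, Finset.mul_sum]
      congr 1
      refine Finset.sum_congr rfl fun i _ => ?_
      rw [Real.norm_eq_abs, sq_abs]
      ring
    rw [h1]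
    simp only [hsq]
    exact tendsto_finsetProd _ fun i _ => tendsto_cos_pow _
  have hle : ∀ n ξ, Complex.normSq (P n ξ) ≤ 1 := by
    intro n ξ
    rw [hsq]
    refine Finset.prod_le_one (fun i _ => by positivity) fun i _ => ?_
    exact pow_le_one₀ (by positivity) (Real.cos_sq_le_one _)
  have hcont : ∀ n, Continuous fun ξ => Complex.normSq (P n ξ) := by
    intro n
    simp only [hsq]
    fun_prop
  have hint : Tendsto (fun n => ∫ ξ, Complex.normSq (P n ξ) * f ξ) atTop
      (𝓝 (∫ ξ, Real.exp (-a ^ 2 * ‖v - ξ‖ ^ 2) * f ξ)) := by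
    refine tendsto_integral_of_dominated_convergence (fun ξ => ‖f ξ‖) ?_ hf.norm ?_ ?_
    · exact fun n => (hcont n).aestronglyMeasurable.mul hf.1
    · refine fun n => Eventually.of_forall fun ξ => ?_
      rw [norm_mul, Real.norm_of_nonneg (Complex.normSq_nonneg _)]
      exact mul_le_of_le_one_left (norm_nonneg _) (hle n ξ)
    · exact Eventually.of_forall fun ξ => (hlim ξ).mul_const _
  have h0 := hlim 0
  rw [sub_zero] at h0
  exact ge_of_tendsto' ((h0.const_mul C).add hint) fun n => trig_nonneg hK hf hKf (hP n)

lemma density_nonneg {K : E → E → ℂ} (hK : IsPSDKernel K) {C : ℝ} {f : E → ℝ} (hf : Integrable f)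
    (hfc : Continuous f) (hKf : ∀ x y, K x y = C + charK f (x - y)) (v : E) (hv : v ≠ 0) :
    0 ≤ f v := by
  set r : ℝ := (Module.finrank ℝ E : ℝ) / 2 with hr
  have h1 := Real.tendsto_integral_gaussian_smul' (f := fun ξ => (f ξ : ℂ)) hf.ofReal (v := v)
    (Complex.continuous_ofReal.comp hfc).continuousAt
  have h2 : Tendsto (fun c : ℝ => (Real.pi * c) ^ r *
      ∫ ξ, Real.exp (-(Real.pi * √c) ^ 2 * ‖v - ξ‖ ^ 2) * f ξ) atTop (𝓝 (f v)) := by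
    have h3 := (Complex.continuous_re.tendsto _).comp h1
    simp only [Complex.ofReal_re] at h3
    refine h3.congr' ?_
    filter_upwards [eventually_gt_atTop 0] with c hc
    have : ∀ w, ((Real.pi * c : ℂ) ^ (Module.finrank ℝ E / 2 : ℂ) *
        Complex.exp (-Real.pi ^ 2 * c * ‖v - w‖ ^ 2)) • (f w : ℂ) =
        (((Real.pi * c) ^ r * (Real.exp (-(Real.pi * √c) ^ 2 * ‖v - w‖ ^ 2) * f w) : ℝ) : ℂ) := by
      intro w
      rw [mul_pow, Real.sq_sqrt hc.le, hr]
      push_cast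
      rw [Complex.ofReal_cpow (by positivity)]
      push_cast
      rw [smul_eq_mul, neg_mul, mul_assoc]
    simp only [Function.comp, this]
    rw [← integral_const_mul]
    rw [integral_complex_ofReal]
    exact Complex.ofReal_re _
  have h4 : Tendsto (fun c : ℝ => (Real.pi * c) ^ r *
      (C * Real.exp (-(Real.pi * √c) ^ 2 * ‖v‖ ^ 2))) atTop (𝓝 0) := by
    have h5 := (tendsto_rpow_mul_exp_neg_mul_atTop_nhds_zero r (Real.pi ^ 2 * ‖v‖ ^ 2)
      (by positivity)).const_mul (Real.pi ^ r * C)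
    rw [mul_zero] at h5
    refine h5.congr' ?_
    filter_upwards [eventually_gt_atTop 0] with c hc
    rw [Real.mul_rpow Real.pi_pos.le hc.le, mul_pow, Real.sq_sqrt hc.le]
    rw [show -(Real.pi ^ 2 * ‖v‖ ^ 2) * c = -(Real.pi ^ 2 * c) * ‖v‖ ^ 2 by ring]
    ring
  have h6 := h4.add h2
  rw [zero_add] at h6
  refine ge_of_tendsto h6 ?_
  filter_upwards [eventually_gt_atTop 0] with c hc
  rw [← mul_add]
  exact mul_nonneg (by positivity) (gauss_nonneg hK hf hKf _ v)

lemma density_nonneg' [Nontrivial E] {K : E → E → ℂ} (hK : IsPSDKernel K) {C : ℝ} {f : E → ℝ}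
    (hf : Integrable f) (hfc : Continuous f) (hKf : ∀ x y, K x y = C + charK f (x - y)) (v : E) :
    0 ≤ f v := by
  have hd : Dense ({0}ᶜ : Set E) := dense_compl_singleton 0
  have hc : IsClosed {w | 0 ≤ f w} := isClosed_le continuous_const hfc
  exact hc.closure_subset_iff.2 (fun w hw => density_nonneg hK hf hfc hKf w hw) (hd v)

lemma charK_sub {f g : E → ℝ} (hf : Integrable f) (hg : Integrable g) (a : ℝ) (u : E) :
    charK (fun ξ => a * f ξ - g ξ) u = a * charK f u - charK g u := by
  simp only [charK]
  rw [← integral_const_mul, ← integral_sub ((integrable_char hf u).const_mul _)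
    (integrable_char hg u)]
  refine integral_congr_ae (Eventually.of_forall fun ξ => ?_)
  push_cast
  ring

lemma psd_comp {X Y : Type*} {K : X → X → ℂ} (hK : IsPSDKernel K) (φ : Y → X) :
    IsPSDKernel (fun x y => K (φ x) (φ y)) := fun n x c => hK n (φ ∘ x) c

lemma psd_sum {X κ : Type*} (s : Finset κ) {K : κ → X → X → ℂ} (hK : ∀ i, IsPSDKernel (K i)) :
    IsPSDKernel (fun x y => ∑ i ∈ s, K i x y) := by
  intro n x c
  have : ∑ j, ∑ k, c j * (starRingEnd ℂ) (c k) * ∑ i ∈ s, K i (x j) (x k) =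
      ∑ i ∈ s, ∑ j, ∑ k, c j * (starRingEnd ℂ) (c k) * K i (x j) (x k) := by
    simp only [Finset.mul_sum]
    rw [Finset.sum_comm]
    rw [Finset.sum_congr rfl fun k _ => Finset.sum_comm]
    rw [Finset.sum_comm]
    exact Finset.sum_congr rfl fun k _ => Finset.sum_comm
  rw [this]
  exact Finset.sum_nonneg fun i _ => hK i n x c

end Helpers

section BSpline

open Filter Topology

lemma bsplineDensity_eq (d p : ℕ) : bsplineDensity d p = fun ξ =>
    (2 * Real.pi) ^ (-(d : ℤ)) * ∏ j, Real.sinc (ξ j / 2) ^ p := by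
  funext ξ
  simp [bsplineDensity, Real.sinc]

lemma bsplineDensity_continuous (d p : ℕ) : Continuous (bsplineDensity d p) := by
  rw [bsplineDensity_eq]
  have := Real.continuous_sinc
  fun_prop

lemma sinc_pow_integrable {p : ℕ} (hp2 : 2 ≤ p) :
    Integrable (fun x : ℝ => Real.sinc (x / 2) ^ p) := by
  have hc : Continuous (fun x : ℝ => Real.sinc (x / 2) ^ p) := by
    have := Real.continuous_sinc
    fun_prop
  refine (integrable_inv_one_add_sq.const_mul 5).mono' hc.aestronglyMeasurable
    (Eventually.of_forall fun x => ?_)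
  rw [norm_pow, Real.norm_eq_abs]
  refine (pow_le_pow_of_le_one (abs_nonneg _) (Real.abs_sinc_le_one _) hp2).trans ?_
  rw [sq_abs, ← div_eq_mul_inv, le_div_iff₀ (by positivity)]
  by_cases hx : x = 0
  · simp [hx]
  · rw [Real.sinc_of_ne_zero (by positivity)]
    have hx2 : 0 < x ^ 2 := by positivity
    have h1 : Real.sin (x / 2) ^ 2 ≤ (x / 2) ^ 2 := sq_le_sq.2 (Real.abs_sin_le_abs)
    have h2 := Real.sin_sq_le_one (x / 2)
    rw [div_pow, div_mul_eq_mul_div, div_le_iff₀ (by positivity)]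
    nlinarith

lemma bsplineDensity_integrable (d : ℕ) {p : ℕ} (hp2 : 2 ≤ p) :
    Integrable (bsplineDensity d p) := by
  rw [bsplineDensity_eq]
  refine Integrable.const_mul ?_ _
  have h := Integrable.fintype_prod (ι := Fin d) (μ := fun _ => (volume : Measure ℝ))
    (fun _ => sinc_pow_integrable hp2)
  exact ((PiLp.volume_preserving_ofLp (Fin d)).integrable_comp h.1).2 h

lemma bsplineDensity_single (d p : ℕ) (i : Fin d) (t : ℝ) :
    bsplineDensity d p (EuclideanSpace.single i t) =
      (2 * Real.pi) ^ (-(d : ℤ)) * Real.sinc (t / 2) ^ p := by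
  rw [bsplineDensity_eq]
  beta_reduce
  rw [Finset.prod_eq_single i]
  · simp
  · intro j _ hj
    simp [hj]
  · simp

lemma bsplineDensity_mono (d : ℕ) {p q : ℕ} (hp : Even p) (hq : Even q) (hpq : p < q)
    (ξ : EuclideanSpace ℝ (Fin d)) : bsplineDensity d q ξ ≤ bsplineDensity d p ξ := by
  rw [bsplineDensity_eq, bsplineDensity_eq]
  refine mul_le_mul_of_nonneg_left ?_ (by positivity)
  refine Finset.prod_le_prod (fun i _ => hq.pow_nonneg _) fun i _ => ?_
  rw [← hq.pow_abs, ← hp.pow_abs]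
  exact pow_le_pow_of_le_one (abs_nonneg _) (Real.abs_sinc_le_one _) hpq.le

lemma bspline_part (d : ℕ) (hd : 0 < d)
    (p q : ℕ) (hp : Even p) (hq : Even q) (hp0 : 0 < p) (hpq : p < q) :
    (IsPSDKernel (fun x y : EuclideanSpace ℝ (Fin d) =>
        bsplineK d p x y - bsplineK d q x y) ∧
      IsLeast {lam : ℝ | 0 ≤ lam ∧
          IsPSDKernel (fun x y : EuclideanSpace ℝ (Fin d) =>
            (lam : ℂ) * bsplineK d p x y - bsplineK d q x y)} 1 ∧
      ¬ ∃ lam : ℝ, 0 ≤ lam ∧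
        IsPSDKernel (fun x y : EuclideanSpace ℝ (Fin d) =>
          (lam : ℂ) * bsplineK d q x y - bsplineK d p x y)) := by
  have hp2 : 2 ≤ p := by
    obtain ⟨k, rfl⟩ := hp
    omega
  have hIp := bsplineDensity_integrable d hp2
  have hIq := bsplineDensity_integrable d (hp2.trans hpq.le)
  have : Nonempty (Fin d) := ⟨⟨0, hd⟩⟩
  have hcst : (0 : ℝ) < (2 * Real.pi) ^ (-(d : ℤ)) := by positivity
  have key : ∀ lam : ℝ, ∀ m n : ℕ, Integrable (bsplineDensity d m) →
      Integrable (bsplineDensity d n) →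
      IsPSDKernel (fun x y : EuclideanSpace ℝ (Fin d) =>
        (lam : ℂ) * bsplineK d m x y - bsplineK d n x y) →
      ∀ t : ℝ, Real.sinc (t / 2) ^ n ≤ lam * Real.sinc (t / 2) ^ m := by
    intro lam m n hm hn hK t
    have h := density_nonneg' hK (C := 0)
      (f := fun ξ => lam * bsplineDensity d m ξ - bsplineDensity d n ξ)
      ((hm.const_mul lam).sub hn)
      (((bsplineDensity_continuous d m).const_mul lam).sub (bsplineDensity_continuous d n))
      (fun x y => by rw [charK_sub hm hn, Complex.ofReal_zero, zero_add]; rfl)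
      (EuclideanSpace.single ⟨0, hd⟩ t)
    simp only [bsplineDensity_single] at h
    rw [mul_left_comm, ← mul_sub] at h
    exact sub_nonneg.1 (nonneg_of_mul_nonneg_right h hcst)
  have hpsd : IsPSDKernel (fun x y : EuclideanSpace ℝ (Fin d) =>
      ((1 : ℝ) : ℂ) * bsplineK d p x y - bsplineK d q x y) := by
    have := psd_of_nonneg (f := fun ξ => 1 * bsplineDensity d p ξ - bsplineDensity d q ξ)
      ((hIp.const_mul 1).sub hIq)
      (fun ξ => by rw [one_mul]; exact sub_nonneg.2 (bsplineDensity_mono d hp hq hpq ξ))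
    simp only [charK_sub hIp hIq] at this
    exact this
  refine ⟨by simpa using hpsd, ⟨⟨zero_le_one, hpsd⟩, ?_⟩, ?_⟩
  · rintro lam ⟨-, hK⟩
    simpa using key lam p q hIp hIq hK 0
  · rintro ⟨lam, -, hK⟩
    have h := key lam q p hIq hIp hK
    have hc : Continuous fun t : ℝ => lam * Real.sinc (t / 2) ^ (q - p) := by
      have := Real.continuous_sinc
      fun_prop
    have h1 : (1 : ℝ) ≤ lam * Real.sinc (2 * Real.pi / 2) ^ (q - p) := by
      refine ge_of_tendsto ((hc.tendsto (2 * Real.pi)).mono_left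
        (nhdsWithin_le_nhds (s := Set.Iio (2 * Real.pi)))) ?_
      filter_upwards [Ioo_mem_nhdsLT Real.two_pi_pos] with t ht
      have hs : 0 < Real.sinc (t / 2) := by
        rw [Real.sinc_of_ne_zero (by linarith [ht.1])]
        exact div_pos (Real.sin_pos_of_pos_of_lt_pi (by linarith [ht.1]) (by linarith [ht.2]))
          (by linarith [ht.1])
      have h2 := h t
      rw [← Nat.sub_add_cancel hpq.le, pow_add, ← mul_assoc] at h2
      exact (le_mul_iff_one_le_left (pow_pos hs p)).1 h2
    rw [mul_div_cancel_left₀ _ two_ne_zero, Real.sinc_of_ne_zero Real.pi_ne_zero, Real.sin_pi,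
      zero_div, zero_pow (by omega), mul_zero] at h1
    linarith

end BSpline

section Anova

open Filter Topology

/-- Fourier density of the one dimensional Gaussian kernel. -/
noncomputable def gd (τ : ℝ) (ξ : ℝ) : ℝ := √(τ / (4 * Real.pi)) * Real.exp (-(τ / 4) * ξ ^ 2)

lemma gd_integrable {τ : ℝ} (hτ : 0 < τ) : Integrable (gd τ) :=
  (integrable_exp_neg_mul_sq (by positivity)).const_mul _

lemma gd_continuous (τ : ℝ) : Continuous (gd τ) := by
  unfold gd
  fun_prop

lemma charK_gd {τ : ℝ} (hτ : 0 < τ) (u : ℝ) :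
    charK (gd τ) u = ((Real.exp (-|u| ^ 2 / τ) : ℝ) : ℂ) := by
  have h := fourierIntegral_gaussian (b := ((τ / 4 : ℝ) : ℂ)) (by simpa using hτ) (u : ℂ)
  have h1 : charK (gd τ) u = ∫ x : ℝ, (√(τ / (4 * Real.pi)) : ℂ) *
      (Complex.exp (Complex.I * u * x) * Complex.exp (-((τ / 4 : ℝ) : ℂ) * x ^ 2)) := by
    unfold charK gd
    refine integral_congr_ae (Eventually.of_forall fun x => ?_)
    simp only [RCLike.inner_apply, conj_trivial]
    push_cast
    rw [show Complex.I * ((x : ℂ) * (u : ℂ)) = Complex.I * u * x by ring]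
    ring
  rw [h1, integral_const_mul, h, ← Complex.ofReal_div,
    show (1 / 2 : ℂ) = ((1 / 2 : ℝ) : ℂ) by push_cast; rfl,
    ← Complex.ofReal_cpow (by positivity), ← Real.sqrt_eq_rpow, ← mul_assoc, ← Complex.ofReal_mul,
    ← Real.sqrt_mul (by positivity)]
  have h2 : τ / (4 * Real.pi) * (Real.pi / (τ / 4)) = 1 := by
    have := Real.pi_ne_zero
    field_simp
  rw [h2, Real.sqrt_one, Complex.ofReal_one, one_mul, sq_abs]
  push_cast
  rw [mul_div_cancel₀ _ (by norm_num)]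

lemma anovaK_single {d : ℕ} (i : Fin d) {τ : ℝ} (hτ : 0 < τ) (s t : ℝ) :
    anovaK d τ (EuclideanSpace.single i s) (EuclideanSpace.single i t) =
      charK (gd τ) (s - t) + (((d : ℝ) - 1 : ℝ) : ℂ) := by
  rw [charK_gd hτ, anovaK, ← Complex.ofReal_add]
  congr 1
  rw [← Finset.add_sum_erase _ _ (Finset.mem_univ i)]
  congr 1
  · simp
  · rw [Finset.sum_congr rfl (g := fun _ => (1 : ℝ))]
    · have : 1 ≤ d := i.pos
      simp [Finset.card_erase_of_mem, Nat.cast_sub this]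
    · intro j hj
      simp [Finset.ne_of_mem_erase hj]

lemma anova_key {d : ℕ} (i : Fin d) {τ₁ τ₂ : ℝ} (h1 : 0 < τ₁) (h2 : 0 < τ₂) (lam : ℝ)
    (hK : IsPSDKernel (fun x y : EuclideanSpace ℝ (Fin d) =>
            (lam : ℂ) * anovaK d τ₁ x y - anovaK d τ₂ x y)) (t : ℝ) :
    gd τ₂ t ≤ lam * gd τ₁ t := by
  have h := density_nonneg' (psd_comp hK (fun s : ℝ => EuclideanSpace.single i s))
    (C := (lam - 1) * ((d : ℝ) - 1)) (f := fun ξ => lam * gd τ₁ ξ - gd τ₂ ξ)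
    (((gd_integrable h1).const_mul lam).sub (gd_integrable h2))
    (((gd_continuous τ₁).const_mul lam).sub (gd_continuous τ₂))
    (fun x y => by
      rw [charK_sub (gd_integrable h1) (gd_integrable h2), anovaK_single i h1, anovaK_single i h2]
      push_cast
      ring) t
  exact sub_nonneg.1 h

lemma anova_part (d : ℕ) (hd : 0 < d) (τ₁ τ₂ : ℝ) (hτ₁ : 0 < τ₁) (hτ₁₂ : τ₁ < τ₂) :
    (IsPSDKernel (fun x y : EuclideanSpace ℝ (Fin d) =>
        ((Real.sqrt (τ₂ / τ₁) : ℝ) : ℂ) * anovaK d τ₁ x y - anovaK d τ₂ x y) ∧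
      IsLeast {lam : ℝ | 0 ≤ lam ∧
          IsPSDKernel (fun x y : EuclideanSpace ℝ (Fin d) =>
            (lam : ℂ) * anovaK d τ₁ x y - anovaK d τ₂ x y)}
        (Real.sqrt (τ₂ / τ₁)) ∧
      ¬ ∃ lam : ℝ, 0 ≤ lam ∧
        IsPSDKernel (fun x y : EuclideanSpace ℝ (Fin d) =>
          (lam : ℂ) * anovaK d τ₂ x y - anovaK d τ₁ x y)) := by
  have hτ₂ := hτ₁.trans hτ₁₂
  have hpi := Real.pi_pos
  have hs : √(τ₂ / τ₁) * √(τ₁ / (4 * Real.pi)) = √(τ₂ / (4 * Real.pi)) := by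
    rw [← Real.sqrt_mul (by positivity)]
    congr 1
    field_simp
  have hpsd : IsPSDKernel (fun x y : EuclideanSpace ℝ (Fin d) =>
        ((Real.sqrt (τ₂ / τ₁) : ℝ) : ℂ) * anovaK d τ₁ x y - anovaK d τ₂ x y) := by
    have h1 := psd_of_nonneg (f := fun ξ => √(τ₂ / τ₁) * gd τ₁ ξ - gd τ₂ ξ)
      (((gd_integrable hτ₁).const_mul _).sub (gd_integrable hτ₂)) (fun ξ => by
        unfold gd
        rw [← mul_assoc, hs, ← mul_sub]
        refine mul_nonneg (Real.sqrt_nonneg _) (sub_nonneg.2 (Real.exp_le_exp.2 ?_))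
        nlinarith [sq_nonneg ξ])
    have h2 := psd_sum Finset.univ
      (fun j : Fin d => psd_comp h1 (fun x : EuclideanSpace ℝ (Fin d) => x j))
    convert h2 using 3 with x y
    simp only [charK_sub (gd_integrable hτ₁) (gd_integrable hτ₂), charK_gd hτ₁, charK_gd hτ₂]
    rw [Finset.sum_sub_distrib, ← Finset.mul_sum, anovaK, anovaK, Complex.ofReal_sum,
      Complex.ofReal_sum]
  refine ⟨hpsd, ⟨⟨Real.sqrt_nonneg _, hpsd⟩, ?_⟩, ?_⟩
  · rintro lam ⟨-, hK⟩
    have h := anova_key ⟨0, hd⟩ hτ₁ hτ₂ lam hK 0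
    simp only [gd, ne_eq, OfNat.ofNat_ne_zero, not_false_eq_true, zero_pow, mul_zero,
      Real.exp_zero, mul_one] at h
    rw [← hs] at h
    exact le_of_mul_le_mul_right h (Real.sqrt_pos.2 (by positivity))
  · rintro ⟨lam, -, hK⟩
    have h := anova_key ⟨0, hd⟩ hτ₂ hτ₁ lam hK
    have h1 : ∀ t : ℝ, √(τ₁ / (4 * Real.pi)) ≤
        lam * √(τ₂ / (4 * Real.pi)) * Real.exp (-((τ₂ - τ₁) / 4 * t ^ 2)) := by
      intro t
      have h2 := h t
      unfold gd at h2
      rw [show -(τ₂ / 4) * t ^ 2 = -((τ₂ - τ₁) / 4 * t ^ 2) + -(τ₁ / 4) * t ^ 2 by ring,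
        Real.exp_add, ← mul_assoc, ← mul_assoc] at h2
      exact le_of_mul_le_mul_right h2 (Real.exp_pos _)
    have h3 : Tendsto (fun t : ℝ => lam * √(τ₂ / (4 * Real.pi)) *
        Real.exp (-((τ₂ - τ₁) / 4 * t ^ 2))) atTop (𝓝 (lam * √(τ₂ / (4 * Real.pi)) * 0)) := by
      refine Tendsto.const_mul _ (Real.tendsto_exp_neg_atTop_nhds_zero.comp ?_)
      exact (tendsto_pow_atTop two_ne_zero).const_mul_atTop (by linarith)
    have h4 := ge_of_tendsto' h3 h1
    rw [mul_zero] at h4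
    exact absurd h4 (not_le.2 (Real.sqrt_pos.2 (by positivity)))

end Anova


/-- (a) For even orders `p < q` (with `p` positive): `B_p − B_q` is positive
semidefinite, `1` is the least constant `λ ≥ 0` making `λB_p − B_q` positive
semidefinite, and no `λ ≥ 0` makes `λB_q − B_p` positive semidefinite.
(b) For `0 < τ₁ < τ₂`: `√(τ₂/τ₁) A_{τ₁} − A_{τ₂}` is positive semidefinite with
`√(τ₂/τ₁)` the least such constant, and no `λ ≥ 0` makes `λA_{τ₂} − A_{τ₁}`
positive semidefinite. -/
theorem bspline_anova_inclusion (d : ℕ) (hd : 0 < d)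
    (p q : ℕ) (hp : Even p) (hq : Even q) (hp0 : 0 < p) (hpq : p < q)
    (τ₁ τ₂ : ℝ) (hτ₁ : 0 < τ₁) (hτ₁₂ : τ₁ < τ₂) :
    (IsPSDKernel (fun x y : EuclideanSpace ℝ (Fin d) =>
        bsplineK d p x y - bsplineK d q x y) ∧
      IsLeast {lam : ℝ | 0 ≤ lam ∧
          IsPSDKernel (fun x y : EuclideanSpace ℝ (Fin d) =>
            (lam : ℂ) * bsplineK d p x y - bsplineK d q x y)} 1 ∧
      ¬ ∃ lam : ℝ, 0 ≤ lam ∧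
        IsPSDKernel (fun x y : EuclideanSpace ℝ (Fin d) =>
          (lam : ℂ) * bsplineK d q x y - bsplineK d p x y)) ∧
    (IsPSDKernel (fun x y : EuclideanSpace ℝ (Fin d) =>
        ((Real.sqrt (τ₂ / τ₁) : ℝ) : ℂ) * anovaK d τ₁ x y - anovaK d τ₂ x y) ∧
      IsLeast {lam : ℝ | 0 ≤ lam ∧
          IsPSDKernel (fun x y : EuclideanSpace ℝ (Fin d) =>
            (lam : ℂ) * anovaK d τ₁ x y - anovaK d τ₂ x y)}
        (Real.sqrt (τ₂ / τ₁)) ∧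
      ¬ ∃ lam : ℝ, 0 ≤ lam ∧
        IsPSDKernel (fun x y : EuclideanSpace ℝ (Fin d) =>
          (lam : ℂ) * anovaK d τ₂ x y - anovaK d τ₁ x y)) := by
  exact ⟨bspline_part d hd p q hp hq hp0 hpq, anova_part d hd τ₁ τ₂ hτ₁ hτ₁₂⟩
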